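/- arXiv:2209.02306 — 4 statements merged into one kernel-verified Lean document; each statement's English description precedes it below -/
import Mathlib

section
/- Let M = P + εD ∈ 𝔻ℍ[t] (with P, D ∈ ℍ[t]) be a reduced unbounded motion polynomial. If M admits a factorization into monic linear motion polynomial factors, then P has no linear real factor of multiplicity two, i.e., there is no a ∈ ℝ with (t − a)² dividing P in ℍ[t]. -/
open Polynomial DualNumber TrivSqZeroExt

noncomputable section

/-- The real quaternions. -/
abbrev Hq : Type := Quaternion ℝ

/-- The dual quaternions. -/
abbrev DHq : Type := DualNumber Hq

/-- Conjugation of a dual quaternion: `(p + ε d)* = p* + ε d*`. -/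
instance : Star DHq := ⟨fun x => inl (star x.fst) + inr (star x.snd)⟩

/-- Coefficient-wise (quaternion) conjugation of a polynomial. -/
def cstar {R : Type*} [Semiring R] [Star R] (A : R[X]) : R[X] :=
  A.sum fun n a => Polynomial.C (star a) * Polynomial.X ^ n

/-- The embedding `ℝ[t] → ℍ[t]`. -/
def qPoly (f : ℝ[X]) : Hq[X] := f.map (algebraMap ℝ Hq)

/-- The embedding `ℍ[t] → 𝔻ℍ[t]` (primal part). -/
def dhQ (P : Hq[X]) : DHq[X] := P.map (inlHom Hq Hq)

/-- The embedding `ℝ[t] → 𝔻ℍ[t]`. -/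
def dPoly (f : ℝ[X]) : DHq[X] := dhQ (qPoly f)

/-- The dual quaternion polynomial `P + ε D` with primal part `P` and dual part `D`. -/
def mp (P D : Hq[X]) : DHq[X] := dhQ P + Polynomial.C ε * dhQ D

/-- The primal part of a dual quaternion polynomial. -/
def primal (A : DHq[X]) : Hq[X] := A.map (fstHom ℝ Hq Hq).toRingHom

/-- A motion polynomial: a dual quaternion polynomial whose norm polynomial
`ν(M) = M·M*` is a nonzero real polynomial. -/
def IsMotion (M : DHq[X]) : Prop := ∃ f : ℝ[X], f ≠ 0 ∧ M * cstar M = dPoly f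

/-- A real polynomial divides a quaternion polynomial. -/
def RDvdQ (f : ℝ[X]) (A : Hq[X]) : Prop := ∃ B : Hq[X], A = qPoly f * B

/-- A real polynomial divides a dual quaternion polynomial. -/
def RDvdD (f : ℝ[X]) (A : DHq[X]) : Prop := ∃ B : DHq[X], A = dPoly f * B

/-- `g` is the greatest common monic real polynomial divisor of a quaternion polynomial `A`
(with itself), i.e. `g = mrpf A`. -/
def IsMrpfQ (g : ℝ[X]) (A : Hq[X]) : Prop :=
  g.Monic ∧ RDvdQ g A ∧ ∀ f : ℝ[X], f.Monic → RDvdQ f A → f ∣ g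

/-- `g` is the greatest common monic real polynomial divisor of `c ∈ ℝ[t]` and a quaternion
polynomial `A`, i.e. `g = mrpf(c, A)`. -/
def IsMrpf2 (g : ℝ[X]) (c : ℝ[X]) (A : Hq[X]) : Prop :=
  g.Monic ∧ g ∣ c ∧ RDvdQ g A ∧
    ∀ f : ℝ[X], f.Monic → f ∣ c → RDvdQ f A → f ∣ g

/-- `g` is the greatest common monic real polynomial divisor of `c ∈ ℝ[t]` and two quaternion
polynomials `A` and `B`, i.e. `g = mrpf(c, A, B)`. -/
def IsMrpf3 (g : ℝ[X]) (c : ℝ[X]) (A B : Hq[X]) : Prop :=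
  g.Monic ∧ g ∣ c ∧ RDvdQ g A ∧ RDvdQ g B ∧
    ∀ f : ℝ[X], f.Monic → f ∣ c → RDvdQ f A → RDvdQ f B → f ∣ g

/-- A quaternion polynomial is reduced: `mrpf = 1`, i.e. it has only constant real
polynomial factors. -/
def ReducedQ (A : Hq[X]) : Prop := ∀ f : ℝ[X], f.Monic → RDvdQ f A → f = 1

/-- A dual quaternion polynomial is reduced: `mrpf = 1`. -/
def ReducedD (A : DHq[X]) : Prop := ∀ f : ℝ[X], f.Monic → RDvdD f A → f = 1

/-- Boundedness of a (monic reduced) motion polynomial: `mrpf` of its primal part has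
no real root, equivalently no linear real polynomial `t - a` divides the primal part. -/
def BoundedD (M : DHq[X]) : Prop :=
  ∀ a : ℝ, ¬ RDvdQ (Polynomial.X - Polynomial.C a) (primal M)

/-- A generic motion polynomial: monic, a motion polynomial, with `mrpf` of the primal
part equal to `1`. -/
def GenericD (M : DHq[X]) : Prop :=
  M.Monic ∧ IsMotion M ∧ ReducedQ (primal M)

/-- The monic linear dual quaternion polynomial `t - p - ε d`. -/
def lin (p d : Hq) : DHq[X] := mp (Polynomial.X - Polynomial.C p) (-Polynomial.C d)

/-- `M` admits a factorization into monic linear motion polynomial factors. -/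
def HasLinFact (M : DHq[X]) : Prop :=
  ∃ L : List DHq, (∀ h ∈ L, IsMotion (Polynomial.X - Polynomial.C h)) ∧
    M = (L.map fun h => Polynomial.X - Polynomial.C h).prod

end

/-!
A real `a` is central, so evaluation at `a` is multiplicative and, `ℍ` being a division ring,
`t - a` is prime in `ℍ[t]`. If `(t - a)²` divides the primal part of a product of linear factors,
then `t - a` divides the primal parts of two of them. At `a` these two factors lie in `εℍ`, and
`ε² = 0` makes the whole product vanish there. Hence `t - a` divides the product, which is
therefore not reduced.
-/

section CentralRoot

variable {K A : Type*} [CommRing K] [Ring A] [Algebra K A] {a : K} {p q : A[X]}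

theorem eval_algebraMap_mul (a : K) (p q : A[X]) :
    (p * q).eval (algebraMap K A a) = p.eval (algebraMap K A a) * q.eval (algebraMap K A a) :=
  eval₂_mul_noncomm _ _ fun k ↦ (Algebra.commutes a (q.coeff k)).symm

theorem X_sub_C_algebraMap_commute (a : K) (p : A[X]) :
    Commute (X - C (algebraMap K A a)) p :=
  (commute_X p).sub_left (Algebra.commute_algebraMap_left a p)

theorem X_sub_C_algebraMap_dvd_iff :
    X - C (algebraMap K A a) ∣ p ↔ p.eval (algebraMap K A a) = 0 := by
  nontriviality A
  constructor
  · rintro ⟨q, rfl⟩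
    simp only [eval_algebraMap_mul, eval_sub, eval_X, eval_C, sub_self, zero_mul]
  · intro hp
    set d := X - C (algebraMap K A a) with hd
    have hmonic : d.Monic := monic_X_sub_C _
    obtain ⟨r, hr⟩ : ∃ r, p %ₘ d = C r := by
      have hdeg := degree_modByMonic_lt p hmonic
      rw [degree_X_sub_C] at hdeg
      exact ⟨_, eq_C_of_degree_le_zero (Order.lt_succ_iff.mp hdeg)⟩
    have hdiv : C r + d * (p /ₘ d) = p := hr ▸ modByMonic_add_div p d
    have hr0 : r = 0 := by
      rw [← hdiv] at hp
      simpa [eval_algebraMap_mul, hd] using hp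
    rw [← modByMonic_eq_zero_iff_dvd hmonic, hr, hr0, C_0]

theorem X_sub_C_algebraMap_dvd_mul_iff [NoZeroDivisors A] :
    X - C (algebraMap K A a) ∣ p * q ↔
      X - C (algebraMap K A a) ∣ p ∨ X - C (algebraMap K A a) ∣ q := by
  simp only [X_sub_C_algebraMap_dvd_iff, eval_algebraMap_mul, mul_eq_zero]

theorem X_sub_C_algebraMap_sq_dvd_of_dvd_mul [IsDomain A]
    (h : (X - C (algebraMap K A a)) ^ 2 ∣ p * q) :
    (X - C (algebraMap K A a)) ^ 2 ∣ p ∨ (X - C (algebraMap K A a)) ^ 2 ∣ q ∨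
      X - C (algebraMap K A a) ∣ p ∧ X - C (algebraMap K A a) ∣ q := by
  have hcomm := X_sub_C_algebraMap_commute (A := A) a
  have hprime {u v : A[X]} := X_sub_C_algebraMap_dvd_mul_iff (a := a) (p := u) (q := v)
  have hne : X - C (algebraMap K A a) ≠ 0 := X_sub_C_ne_zero _
  generalize X - C (algebraMap K A a) = d at *
  rw [sq] at h ⊢
  by_cases hp : d ∣ p
  · obtain ⟨p, rfl⟩ := hp
    rw [mul_assoc, mul_dvd_mul_iff_left hne] at h
    exact (hprime.1 h).imp (mul_dvd_mul_left d) fun hq ↦ .inr ⟨dvd_mul_right d p, hq⟩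
  · obtain ⟨q, rfl⟩ := (hprime.1 (dvd_of_mul_right_dvd h)).resolve_left hp
    rw [(hcomm p).symm.left_comm, mul_dvd_mul_iff_left hne] at h
    exact .inr (.inl (mul_dvd_mul_left d ((hprime.1 h).resolve_left hp)))

theorem not_X_sub_C_pow_dvd_of_natDegree_lt (r : A) {n : ℕ} (hp : p ≠ 0) (hn : p.natDegree < n) :
    ¬ (X - C r) ^ n ∣ p := by
  have := Nontrivial.of_polynomial_ne hp
  have hmonic : (X - C r).Monic := monic_X_sub_C r
  refine (hmonic.pow n).not_dvd_of_natDegree_lt hp ?_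
  rwa [hmonic.natDegree_pow, natDegree_X_sub_C, mul_one]

end CentralRoot

section SquareZeroKernel

variable {K A B : Type*} [CommRing K] [Ring A] [Ring B] [Algebra K A] [Algebra K B] {a : K}
  (φ : B →ₐ[K] A)

theorem X_sub_C_algebraMap_dvd_map_iff {F : B[X]} :
    X - C (algebraMap K A a) ∣ F.map φ.toRingHom ↔ φ (F.eval (algebraMap K B a)) = 0 := by
  rw [X_sub_C_algebraMap_dvd_iff, ← φ.commutes, eval_map]
  exact Eq.congr_left (eval₂_at_apply φ.toRingHom _)

theorem X_sub_C_algebraMap_dvd_list_prod [IsDomain A]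
    (hφ : ∀ x y, φ x = 0 → φ y = 0 → x * y = 0) {L : List B[X]}
    (hsimple : ∀ F ∈ L, ¬ (X - C (algebraMap K A a)) ^ 2 ∣ F.map φ.toRingHom)
    (hdouble : (X - C (algebraMap K A a)) ^ 2 ∣ L.prod.map φ.toRingHom) :
    X - C (algebraMap K B a) ∣ L.prod := by
  induction L with
  | nil =>
    rw [List.prod_nil, Polynomial.map_one] at hdouble
    exact absurd hdouble (not_X_sub_C_pow_dvd_of_natDegree_lt _ one_ne_zero (by simp))
  | cons F L ih =>
    obtain ⟨hF, hL⟩ := List.forall_mem_cons.1 hsimple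
    rw [List.prod_cons, X_sub_C_algebraMap_dvd_iff, eval_algebraMap_mul]
    rw [List.prod_cons, Polynomial.map_mul] at hdouble
    rcases X_sub_C_algebraMap_sq_dvd_of_dvd_mul hdouble with hF' | hL' | ⟨hF', hL'⟩
    · exact absurd hF' hF
    · rw [X_sub_C_algebraMap_dvd_iff.1 (ih hL hL'), mul_zero]
    · exact hφ _ _ ((X_sub_C_algebraMap_dvd_map_iff φ).1 hF')
        ((X_sub_C_algebraMap_dvd_map_iff φ).1 hL')

theorem unbounded_no_double_linear_factor_general [IsDomain A]
    (hφ : ∀ x y, φ x = 0 → φ y = 0 → x * y = 0) (L : List B) (a : K)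
    (hred : ¬ X - C (algebraMap K B a) ∣ (L.map fun h ↦ X - C h).prod) :
    ¬ (X - C (algebraMap K A a)) ^ 2 ∣ ((L.map fun h ↦ X - C h).prod).map φ.toRingHom := by
  refine fun hdouble ↦ hred (X_sub_C_algebraMap_dvd_list_prod φ hφ ?_ hdouble)
  simp only [List.forall_mem_map, Polynomial.map_sub, map_X, map_C]
  exact fun h _ ↦ not_X_sub_C_pow_dvd_of_natDegree_lt _ (X_sub_C_ne_zero _)
    ((natDegree_X_sub_C_le _).trans_lt one_lt_two)

end SquareZeroKernel

theorem dualNumber_mul_eq_zero_of_fst {R : Type*} [Semiring R] (x y : R[ε]) (hx : x.fst = 0)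
    (hy : y.fst = 0) : x * y = 0 := by
  ext <;> simp [hx, hy]

theorem primal_mp (P D : Hq[X]) : primal (mp P D) = P := by
  ext1 n
  simp [primal, mp, dhQ, coeff_map]

theorem rdvdQ_X_sub_C_pow_iff {a : ℝ} {n : ℕ} {P : Hq[X]} :
    RDvdQ ((X - C a) ^ n) P ↔ (X - C (algebraMap ℝ Hq a)) ^ n ∣ P := by
  simp only [RDvdQ, qPoly, Polynomial.map_pow, Polynomial.map_sub, map_X, map_C, Dvd.dvd]

theorem dPoly_eq_map_algebraMap (f : ℝ[X]) : dPoly f = f.map (algebraMap ℝ DHq) := by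
  rw [dPoly, dhQ, qPoly, Polynomial.map_map]
  rfl

theorem ReducedD.not_X_sub_C_dvd {M : DHq[X]} (hM : ReducedD M) (a : ℝ) :
    ¬ X - C (algebraMap ℝ DHq a) ∣ M := by
  rintro ⟨B, rfl⟩
  have hone : X - C a = 1 := by
    refine hM _ (monic_X_sub_C a) ⟨B, ?_⟩
    rw [dPoly_eq_map_algebraMap, Polynomial.map_sub, map_X, map_C]
  exact not_isUnit_X_sub_C a (hone ▸ isUnit_one)

/-- If a reduced unbounded motion polynomial admits a factorization into monic linear
motion polynomial factors, then its primal part has no linear real factor of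
multiplicity two. -/
theorem unbounded_no_double_linear_factor
    (P D : Hq[X]) (M : DHq[X]) (hM : M = mp P D)
    (hmonic : M.Monic) (hmotion : IsMotion M) (hred : ReducedD M)
    (hunb : ∃ a : ℝ, RDvdQ (Polynomial.X - Polynomial.C a) P)
    (hfact : HasLinFact M) :
    ∀ a : ℝ, ¬ RDvdQ ((Polynomial.X - Polynomial.C a) ^ 2) P := by
  intro a
  obtain ⟨L, -, rfl⟩ := hfact
  rw [rdvdQ_X_sub_C_pow_iff, ← primal_mp P D, ← hM]
  exact unbounded_no_double_linear_factor_general (fstHom ℝ Hq Hq) dualNumber_mul_eq_zero_of_fst L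
    a (hred.not_X_sub_C_dvd a)
end

section
/- (ABC-Lemma) Let N ∈ ℝ[t] be a quadratic irreducible real polynomial and let A, B, C ∈ ℍ[t] be quaternion polynomials. If N divides the product A·B·C in ℍ[t] and N divides B·B*, then N divides A·B or N divides B·C. -/
open Polynomial DualNumber TrivSqZeroExt

/-!
Write `n(b) = b b*` for the norm and `tr(x) = x + x*` for the trace of quaternions over a
commutative ring. The identity `b x b = tr(x b) b - n(b) x*` gives, for every `x`,

  `(a b) x (b c) = tr(x b) (a b c) - n(b) a x* c`,

so a central `p` dividing both `a b c` and `n(b)` divides `(a b) x (b c)` for every `x`. If `p` is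
prime and does not divide `2`, the ideal it generates is prime in the noncommutative sense, because
the coordinates of a quaternion are recovered, up to the factor `4`, by the sandwich sum
`q - i q i - j q j - k q k = 4 re q`. Hence `p` divides `a b` or `b c`. Quaternion polynomials are
covered since `ℍ[R][t] ≅ ℍ[R[t]]`.
-/

open scoped Quaternion

namespace QuaternionPoly

section Quaternion

variable {R : Type*} [CommRing R]

/-- The quaternion `a + b i + c j + d k`. The anonymous constructor only produces elements of the
quaternion algebra `ℍ[R,-1,-1]`, which the lemmas on `ℍ[R]` do not see through. -/
def ofCoords (a b c d : R) : ℍ[R] := ⟨a, b, c, d⟩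

@[simp] theorem re_ofCoords (a b c d : R) : (ofCoords a b c d).re = a := rfl

@[simp] theorem imI_ofCoords (a b c d : R) : (ofCoords a b c d).imI = b := rfl

@[simp] theorem imJ_ofCoords (a b c d : R) : (ofCoords a b c d).imJ = c := rfl

@[simp] theorem imK_ofCoords (a b c d : R) : (ofCoords a b c d).imK = d := rfl

theorem coe_dvd_iff {r : R} {q : ℍ[R]} :
    (r : ℍ[R]) ∣ q ↔ r ∣ q.re ∧ r ∣ q.imI ∧ r ∣ q.imJ ∧ r ∣ q.imK := by
  constructor
  · rintro ⟨c, rfl⟩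
    simp only [Quaternion.coe_mul_eq_smul, Quaternion.re_smul, Quaternion.imI_smul,
      Quaternion.imJ_smul, Quaternion.imK_smul, smul_eq_mul, dvd_mul_right, and_self]
  · rintro ⟨⟨a, ha⟩, ⟨b, hb⟩, ⟨c, hc⟩, ⟨d, hd⟩⟩
    refine ⟨ofCoords a b c d, ?_⟩
    rw [Quaternion.coe_mul_eq_smul]
    apply Quaternion.ext <;> assumption

theorem coe_dvd_mul_of_coe_dvd_right {r : R} {q : ℍ[R]} (h : (r : ℍ[R]) ∣ q) (x : ℍ[R]) :
    (r : ℍ[R]) ∣ x * q := by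
  obtain ⟨c, rfl⟩ := h
  exact ⟨x * c, by rw [← mul_assoc, ← mul_assoc, Quaternion.coe_commutes]⟩

theorem dvd_or_coe_dvd_of_coe_dvd_coe_mul {p r : R} (hp : Prime p) {q : ℍ[R]}
    (h : (p : ℍ[R]) ∣ r * q) : p ∣ r ∨ (p : ℍ[R]) ∣ q := by
  simp only [Quaternion.coe_mul_eq_smul, coe_dvd_iff, Quaternion.re_smul, Quaternion.imI_smul,
    Quaternion.imJ_smul, Quaternion.imK_smul, smul_eq_mul, hp.dvd_mul] at h ⊢
  tauto

theorem coe_four_mul_re (q : ℍ[R]) :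
    ((4 * q.re : R) : ℍ[R]) = q - ofCoords 0 1 0 0 * q * ofCoords 0 1 0 0
      - ofCoords 0 0 1 0 * q * ofCoords 0 0 1 0 - ofCoords 0 0 0 1 * q * ofCoords 0 0 0 1 := by
  ext <;> simp; ring

theorem coe_dvd_or_coe_dvd_of_forall_coe_dvd_mul_mul {p : R} (hp : Prime p) (h2 : ¬ p ∣ 2)
    {u v : ℍ[R]} (h : ∀ x, (p : ℍ[R]) ∣ u * x * v) : (p : ℍ[R]) ∣ u ∨ (p : ℍ[R]) ∣ v := by
  refine or_iff_not_imp_right.2 fun hv => ?_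
  have re_mul_dvd (x : ℍ[R]) : p ∣ (u * x).re := by
    have dvd_sandwich (y z : ℍ[R]) : (p : ℍ[R]) ∣ y * (u * x) * z * v := by
      simpa only [mul_assoc] using coe_dvd_mul_of_coe_dvd_right (h (x * z)) y
    have coe_dvd_four_re_mul : (p : ℍ[R]) ∣ ((4 * (u * x).re : R) : ℍ[R]) * v := by
      rw [coe_four_mul_re, sub_mul, sub_mul, sub_mul]
      exact (((h x).sub (dvd_sandwich _ _)).sub (dvd_sandwich _ _)).sub (dvd_sandwich _ _)
    have not_dvd_four : ¬ p ∣ 4 := by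
      rw [show (4 : R) = 2 ^ 2 by norm_num]
      exact fun h4 => h2 (hp.dvd_of_dvd_pow h4)
    have dvd_four_mul_re : p ∣ 4 * (u * x).re :=
      (dvd_or_coe_dvd_of_coe_dvd_coe_mul hp coe_dvd_four_re_mul).resolve_right hv
    exact (hp.dvd_or_dvd dvd_four_mul_re).resolve_left not_dvd_four
  refine coe_dvd_iff.2 ⟨?_, ?_, ?_, ?_⟩
  · simpa using re_mul_dvd 1
  · simpa using re_mul_dvd (ofCoords 0 1 0 0)
  · simpa using re_mul_dvd (ofCoords 0 0 1 0)
  · simpa using re_mul_dvd (ofCoords 0 0 0 1)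

theorem mul_mul_self_eq_coe_mul_sub (b x : ℍ[R]) :
    b * x * b = ((2 * (x * b).re : R) : ℍ[R]) * b - b * star b * star x := by
  rw [Quaternion.coe_commutes, ← Quaternion.self_add_star', star_mul]
  noncomm_ring

theorem coe_dvd_mul_or_coe_dvd_mul_of_coe_dvd_mul_star {p : R} (hp : Prime p)
    (h2 : ¬ p ∣ 2) {a b c : ℍ[R]} (habc : (p : ℍ[R]) ∣ a * b * c)
    (hb : (p : ℍ[R]) ∣ b * star b) :
    (p : ℍ[R]) ∣ a * b ∨ (p : ℍ[R]) ∣ b * c := by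
  refine coe_dvd_or_coe_dvd_of_forall_coe_dvd_mul_mul hp h2 fun x => ?_
  have expand : a * b * x * (b * c) =
      ((2 * (x * b).re : R) : ℍ[R]) * (a * b * c) - a * (b * star b * (star x * c)) := calc
    a * b * x * (b * c) = a * (b * x * b) * c := by simp only [mul_assoc]
    _ = a * ((2 * (x * b).re : R) : ℍ[R]) * b * c - a * (b * star b * (star x * c)) := by
      rw [mul_mul_self_eq_coe_mul_sub]
      noncomm_ring
    _ = _ := by rw [← Quaternion.coe_commutes]; simp only [mul_assoc]
  rw [expand]
  exact (coe_dvd_mul_of_coe_dvd_right habc _).sub (coe_dvd_mul_of_coe_dvd_right (hb.mul_right _) a)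

end Quaternion

section Polynomial

theorem coeff_cstar {R : Type*} [Semiring R] [StarAddMonoid R] (A : R[X]) (n : ℕ) :
    (cstar A).coeff n = star (A.coeff n) := by
  simp only [cstar, Polynomial.sum, finsetSum_coeff, coeff_C_mul, coeff_X_pow, mul_ite, mul_one,
    mul_zero, Finset.sum_ite_eq, mem_support_iff, ite_eq_left_iff, not_not]
  intro h
  rw [h, star_zero]

/-- The ring homomorphism `ℍ[R] → ℍ[S]` applying `f : R → S` to each of the four coordinates. -/
def quaternionMap {R S : Type*} [CommRing R] [CommRing S] (f : R →+* S) : ℍ[R] →+* ℍ[S] where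
  toFun q := ofCoords (f q.re) (f q.imI) (f q.imJ) (f q.imK)
  map_one' := by ext <;> simp
  map_zero' := by ext <;> simp
  map_mul' x y := by ext <;> simp
  map_add' x y := by ext <;> simp

variable {R : Type*} [CommRing R]

/-- The homomorphism `ℍ[R][t] → ℍ[R[t]]` sending a quaternion polynomial to the quaternion of its
coordinate polynomials. It is defined as evaluation at the central element `t` of `ℍ[R[t]]`, which
makes multiplicativity automatic. -/
noncomputable def polyCoordsHom : ℍ[R][X] →+* ℍ[R[X]] :=
  eval₂RingHom' (quaternionMap C) ((X : R[X]) : ℍ[R[X]])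
    fun _ => (Quaternion.coe_commute _ _).symm

theorem polyCoordsHom_monomial (n : ℕ) (q : ℍ[R]) :
    polyCoordsHom (monomial n q) = ofCoords (monomial n q.re) (monomial n q.imI)
      (monomial n q.imJ) (monomial n q.imK) := by
  have h : polyCoordsHom (monomial n q) = (X ^ n : R[X]) • quaternionMap C q := by
    simp [polyCoordsHom, ← Quaternion.coe_pow, Quaternion.mul_coe_eq_smul]
  rw [h]
  ext : 1 <;> simp [quaternionMap, X_pow_mul_C, C_mul_X_pow_eq_monomial]

theorem coeff_eq_ofCoords_coeff_polyCoordsHom (P : ℍ[R][X]) (n : ℕ) :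
    P.coeff n = ofCoords ((polyCoordsHom P).re.coeff n) ((polyCoordsHom P).imI.coeff n)
      ((polyCoordsHom P).imJ.coeff n) ((polyCoordsHom P).imK.coeff n) := by
  induction P using Polynomial.induction_on' with
  | add P Q hP hQ =>
    rw [coeff_add, hP, hQ, map_add]
    ext <;> simp
  | monomial m q =>
    rw [polyCoordsHom_monomial, coeff_monomial]
    split_ifs with h <;> ext <;> simp [coeff_monomial, h]

@[simp] theorem coeff_re_polyCoordsHom (P : ℍ[R][X]) (n : ℕ) :
    (polyCoordsHom P).re.coeff n = (P.coeff n).re := by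
  rw [coeff_eq_ofCoords_coeff_polyCoordsHom, re_ofCoords]

@[simp] theorem coeff_imI_polyCoordsHom (P : ℍ[R][X]) (n : ℕ) :
    (polyCoordsHom P).imI.coeff n = (P.coeff n).imI := by
  rw [coeff_eq_ofCoords_coeff_polyCoordsHom, imI_ofCoords]

@[simp] theorem coeff_imJ_polyCoordsHom (P : ℍ[R][X]) (n : ℕ) :
    (polyCoordsHom P).imJ.coeff n = (P.coeff n).imJ := by
  rw [coeff_eq_ofCoords_coeff_polyCoordsHom, imJ_ofCoords]

@[simp] theorem coeff_imK_polyCoordsHom (P : ℍ[R][X]) (n : ℕ) :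
    (polyCoordsHom P).imK.coeff n = (P.coeff n).imK := by
  rw [coeff_eq_ofCoords_coeff_polyCoordsHom, imK_ofCoords]

theorem polyCoordsHom_injective : Function.Injective (polyCoordsHom (R := R)) := by
  intro P Q h
  ext1 n
  rw [coeff_eq_ofCoords_coeff_polyCoordsHom, h, ← coeff_eq_ofCoords_coeff_polyCoordsHom]

theorem polyCoordsHom_map_algebraMap (f : R[X]) :
    polyCoordsHom (f.map (algebraMap R ℍ[R])) = f := by
  ext n <;> simp [Quaternion.algebraMap_def]

theorem polyCoordsHom_cstar (P : ℍ[R][X]) : polyCoordsHom (cstar P) = star (polyCoordsHom P) := by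
  ext n <;> simp [coeff_cstar]

theorem polyCoordsHom_surjective : Function.Surjective (polyCoordsHom (R := R)) := by
  intro q
  refine ⟨q.re.map (algebraMap R ℍ[R]) + q.imI.map (algebraMap R ℍ[R]) * C (ofCoords 0 1 0 0) +
    q.imJ.map (algebraMap R ℍ[R]) * C (ofCoords 0 0 1 0) +
    q.imK.map (algebraMap R ℍ[R]) * C (ofCoords 0 0 0 1), ?_⟩
  ext n <;> simp [-map_add, -map_mul, Quaternion.algebraMap_def]

theorem map_algebraMap_dvd_iff {f : R[X]} {P : ℍ[R][X]} :
    f.map (algebraMap R ℍ[R]) ∣ P ↔ (f : ℍ[R[X]]) ∣ polyCoordsHom P := by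
  rw [← polyCoordsHom_map_algebraMap f]
  exact (map_dvd_iff (RingEquiv.ofBijective polyCoordsHom
    ⟨polyCoordsHom_injective, polyCoordsHom_surjective⟩)).symm

end Polynomial

end QuaternionPoly

open QuaternionPoly in
theorem abc_lemma_general {R : Type*} [CommRing R] {N : R[X]} (hN : Prime N) (h2 : ¬ N ∣ 2)
    {A B D : ℍ[R][X]} (hABD : N.map (algebraMap R ℍ[R]) ∣ A * B * D)
    (hB : N.map (algebraMap R ℍ[R]) ∣ B * cstar B) :
    N.map (algebraMap R ℍ[R]) ∣ A * B ∨ N.map (algebraMap R ℍ[R]) ∣ B * D := by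
  simp only [map_algebraMap_dvd_iff, map_mul, polyCoordsHom_cstar] at hABD hB ⊢
  exact coe_dvd_mul_or_coe_dvd_mul_of_coe_dvd_mul_star hN h2 hABD hB

/-- ABC-Lemma. -/
theorem abc_lemma (N : ℝ[X]) (hN2 : N.natDegree = 2) (hNirr : Irreducible N)
    (A B Cq : Hq[X]) (h1 : RDvdQ N (A * B * Cq)) (h2 : RDvdQ N (B * cstar B)) :
    RDvdQ N (A * B) ∨ RDvdQ N (B * Cq) := by
  have two_isUnit : IsUnit (2 : ℝ[X]) := isUnit_C.2 (IsUnit.mk0 (2 : ℝ) two_ne_zero)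
  exact abc_lemma_general hNirr.prime (hNirr.not_dvd_isUnit two_isUnit) h1 h2
end

section
/- (AB-Lemma) Let F ∈ ℝ[t] be monic and let A, B ∈ ℍ[t] be nonzero quaternion polynomials such that F divides A·B in ℍ[t], and the only monic real polynomial dividing both F and A is 1, and likewise for F and B (mrpf(F, A) = mrpf(F, B) = 1). Then there exists a monic quaternion polynomial R ∈ ℍ[t] such that A = A₁·R and B = R*·B₁ for some A₁, B₁ ∈ ℍ[t] and F = R·R*. -/
open Polynomial DualNumber TrivSqZeroExt

/-! The right ideal of `ℍ[t]` generated by `B` and `F` is generated by one monic polynomial `S`, and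
`F ∣ A S` because `F ∣ A B`. Hence the real polynomial `N = S S*` satisfies `F ∣ A S S* = N A`, so
`F ∣ N` since no factor of `F` divides `A`. Comparing `N = F c` with `F = S Q` gives `S* = Q c`, so
`c` divides `S`, and with it both `B` and `F`; thus `c = 1`, `F = S S*`, and `R = S*` works. -/

section Conjugation

theorem cstar_coeff {R : Type*} [Semiring R] [StarAddMonoid R] (A : R[X]) (n : ℕ) :
    (cstar A).coeff n = star (A.coeff n) := by
  simp only [cstar, sum_def, finsetSum_coeff, coeff_C_mul_X_pow, Finset.sum_ite_eq, mem_support_iff]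
  split_ifs with hn
  · rfl
  · rw [notMem_support_iff.mp hn, star_zero]

theorem cstar_cstar {R : Type*} [Semiring R] [StarAddMonoid R] (A : R[X]) :
    cstar (cstar A) = A := by
  ext n
  simp only [cstar_coeff, star_star]

variable {R : Type*} [Semiring R] [StarRing R]

theorem cstar_mul (A B : R[X]) : cstar (A * B) = cstar B * cstar A := by
  ext n
  rw [cstar_coeff, coeff_mul, coeff_mul, star_sum, ← Finset.Nat.sum_antidiagonal_swap]
  simp only [cstar_coeff, star_mul, Prod.fst_swap, Prod.snd_swap]

theorem monic_cstar {A : R[X]} (hA : A.Monic) : (cstar A).Monic := by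
  refine monic_of_natDegree_le_of_coeff_eq_one A.natDegree ?_ ?_
  · refine natDegree_le_iff_coeff_eq_zero.mpr fun n hn => ?_
    rw [cstar_coeff, coeff_eq_zero_of_natDegree_lt hn, star_zero]
  · rw [cstar_coeff, hA.coeff_natDegree, star_one]

end Conjugation

section CentralFactors

variable {K D : Type*}

theorem commute_map_algebraMap [CommSemiring K] [Semiring D] [Algebra K D] (F : K[X]) (P : D[X]) :
    Commute (F.map (algebraMap K D)) P :=
  letI := Polynomial.algebra K D
  Algebra.commutes F P

theorem map_algebraMap_dvd_mul_left [CommSemiring K] [Semiring D] [Algebra K D] {F : K[X]}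
    {P : D[X]} (h : F.map (algebraMap K D) ∣ P) (Q : D[X]) : F.map (algebraMap K D) ∣ Q * P := by
  obtain ⟨W, rfl⟩ := h
  exact ⟨Q * W, (commute_map_algebraMap F Q).symm.left_comm W⟩

theorem dvd_of_map_dvd_map_mul [Field K] [Ring D] [Algebra K D] {F G : K[X]} {P : D[X]}
    (hF : F.Monic)
    (hFP : ∀ f : K[X], f.Monic → f ∣ F → f.map (algebraMap K D) ∣ P → f = 1)
    (h : F.map (algebraMap K D) ∣ G.map (algebraMap K D) * P) : F ∣ G := by
  classical
  have hd : (gcd F G).Monic := by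
    rw [← normalize_gcd]
    exact monic_normalize fun h0 => hF.ne_zero ((gcd_eq_zero_iff F G).mp h0).1
  obtain ⟨F', hF'⟩ := gcd_dvd_left F G
  have hgcdP : F.map (algebraMap K D) ∣ (gcd F G).map (algebraMap K D) * P := by
    obtain ⟨a, b, hab⟩ := exists_gcd_eq_mul_add_mul F G
    rw [hab, mul_comm G b, Polynomial.map_add, Polynomial.map_mul, Polynomial.map_mul, add_mul,
      mul_assoc, mul_assoc]
    exact dvd_add (dvd_mul_right _ _) (map_algebraMap_dvd_mul_left h _)
  have hF'P : F'.map (algebraMap K D) ∣ P := by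
    obtain ⟨W, hW⟩ := hgcdP
    refine ⟨W, (hd.map (algebraMap K D)).isRegular.left ?_⟩
    simpa only [← mul_assoc, ← Polynomial.map_mul, ← hF'] using hW
  have hF'1 : F' = 1 :=
    hFP F' (hd.of_mul_monic_left (hF' ▸ hF)) (Dvd.intro_left _ hF'.symm) hF'P
  rw [hF', hF'1, mul_one]
  exact gcd_dvd_right F G

end CentralFactors

section RightIdeals

variable {D : Type*} [DivisionRing D]

theorem exists_monic_mem_forall_mem_dvd {I : Submodule D[X]ᵐᵒᵖ D[X]} (hI : I ≠ ⊥) :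
    ∃ S ∈ I, S.Monic ∧ ∀ P ∈ I, S ∣ P := by
  obtain ⟨T, ⟨hTI, hT⟩, hmin⟩ := exists_minimalFor_of_wellFoundedLT
    (fun P : D[X] => P ∈ I ∧ P ≠ 0) degree (I.ne_bot_iff.mp hI)
  have hS : (T * C T.leadingCoeff⁻¹).Monic := monic_mul_leadingCoeff_inv hT
  have hSI : T * C T.leadingCoeff⁻¹ ∈ I := I.smul_mem (.op _) hTI
  have hdeg : (T * C T.leadingCoeff⁻¹).degree = T.degree :=
    degree_mul_C (inv_ne_zero (leadingCoeff_ne_zero.mpr hT))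
  refine ⟨_, hSI, hS, fun P hP => (modByMonic_eq_zero_iff_dvd hS).mp ?_⟩
  by_contra hrem
  have hremI : P %ₘ (T * C T.leadingCoeff⁻¹) ∈ I := by
    rw [modByMonic_eq_sub_mul_div]
    exact I.sub_mem hP (I.smul_mem (.op _) hSI)
  have hlt := degree_modByMonic_lt P hS
  rw [hdeg] at hlt
  exact hlt.not_ge (hmin ⟨hremI, hrem⟩ hlt.le)

theorem exists_monic_gcd_left {F : D[X]} (hF : F ≠ 0) (B : D[X]) :
    ∃ S U V : D[X], S.Monic ∧ S ∣ B ∧ S ∣ F ∧ S = B * U + F * V := by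
  have hFI : F ∈ Submodule.span D[X]ᵐᵒᵖ {B, F} := Submodule.subset_span (by simp)
  obtain ⟨S, hSI, hS, hdvd⟩ :=
    exists_monic_mem_forall_mem_dvd ((Submodule.ne_bot_iff _).mpr ⟨F, hFI, hF⟩)
  obtain ⟨U, V, hUV⟩ := Submodule.mem_span_pair.mp hSI
  exact ⟨S, U.unop, V.unop, hS, hdvd B (Submodule.subset_span (by simp)), hdvd F hFI, hUV.symm⟩

end RightIdeals

section Norm

variable {K D : Type*}

theorem cstar_eq_self_iff_mem_lifts [Semiring K] [Semiring D] [StarAddMonoid D] {i : K →+* D}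
    (hi : ∀ x : D, IsSelfAdjoint x ↔ x ∈ Set.range i) {A : D[X]} :
    cstar A = A ↔ A ∈ lifts i := by
  simp only [Polynomial.ext_iff, cstar_coeff, lifts_iff_coeff_lifts, ← hi, IsSelfAdjoint]

theorem exists_map_eq_mul_cstar [Semiring K] [Semiring D] [StarRing D] {i : K →+* D}
    (hi : ∀ x : D, IsSelfAdjoint x ↔ x ∈ Set.range i) (S : D[X]) :
    ∃ N : K[X], N.map i = S * cstar S := by
  rw [← mem_lifts, ← cstar_eq_self_iff_mem_lifts hi, cstar_mul, cstar_cstar]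

theorem commute_cstar [CommSemiring K] [Ring D] [IsDomain D] [StarRing D] [Algebra K D]
    (hfix : ∀ x : D, IsSelfAdjoint x ↔ x ∈ Set.range (algebraMap K D))
    (S : D[X]) : Commute S (cstar S) := by
  obtain ⟨N, hN⟩ := exists_map_eq_mul_cstar hfix S
  rcases eq_or_ne S 0 with rfl | hS
  · exact Commute.zero_left _
  · refine mul_left_cancel₀ hS ?_
    rw [← mul_assoc S (cstar S) S, ← hN, (commute_map_algebraMap N S).eq]

theorem map_dvd_of_map_dvd_cstar [CommSemiring K] [Semiring D] [StarRing D] [Algebra K D]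
    (hfix : ∀ x : D, IsSelfAdjoint x ↔ x ∈ Set.range (algebraMap K D))
    {f : K[X]} {S : D[X]} (h : f.map (algebraMap K D) ∣ cstar S) :
    f.map (algebraMap K D) ∣ S := by
  obtain ⟨W, hW⟩ := h
  have hf : cstar (f.map (algebraMap K D)) = f.map (algebraMap K D) :=
    (cstar_eq_self_iff_mem_lifts hfix).mpr ((mem_lifts _).mpr ⟨f, rfl⟩)
  rw [← cstar_cstar S, hW, cstar_mul, hf]
  exact map_algebraMap_dvd_mul_left dvd_rfl _

theorem map_eq_mul_cstar_of_dvd [Field K] [Ring D] [IsDomain D] [StarRing D] [Algebra K D]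
    (hfix : ∀ x : D, IsSelfAdjoint x ↔ x ∈ Set.range (algebraMap K D))
    {F : K[X]} (hF : F.Monic) {A B S : D[X]} (hS : S.Monic)
    (hFA : ∀ f : K[X], f.Monic → f ∣ F → f.map (algebraMap K D) ∣ A → f = 1)
    (hFB : ∀ f : K[X], f.Monic → f ∣ F → f.map (algebraMap K D) ∣ B → f = 1)
    (hSB : S ∣ B) (hSF : S ∣ F.map (algebraMap K D)) (hAS : F.map (algebraMap K D) ∣ A * S) :
    F.map (algebraMap K D) = S * cstar S := by
  obtain ⟨N, hN⟩ := exists_map_eq_mul_cstar hfix S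
  have hNm : N.Monic :=
    monic_of_injective (algebraMap K D).injective (hN ▸ hS.mul (monic_cstar hS))
  have hFNA : F.map (algebraMap K D) ∣ N.map (algebraMap K D) * A := by
    rw [(commute_map_algebraMap N A).eq, hN, ← mul_assoc]
    exact hAS.mul_right _
  obtain ⟨c, rfl⟩ := dvd_of_map_dvd_map_mul hF hFA hFNA
  have hcS : c.map (algebraMap K D) ∣ S := by
    obtain ⟨Q, hQ⟩ := hSF
    have hSQ : cstar S = Q * c.map (algebraMap K D) := by
      apply mul_left_cancel₀ hS.ne_zero
      rw [← hN, Polynomial.map_mul, hQ, mul_assoc]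
    exact map_dvd_of_map_dvd_cstar hfix (hSQ ▸ map_algebraMap_dvd_mul_left dvd_rfl Q)
  have hcm : c.Monic := hF.of_mul_monic_left hNm
  have hcF : c ∣ F := (map_dvd_map _ (algebraMap K D).injective hcm).mp (hcS.trans hSF)
  rw [← hN, hFB c hcm hcF (hcS.trans hSB), mul_one]

end Norm

theorem ab_lemma_general {K D : Type*} [Field K] [DivisionRing D] [StarRing D] [Algebra K D]
    (hfix : ∀ x : D, IsSelfAdjoint x ↔ x ∈ Set.range (algebraMap K D))
    (F : K[X]) (hF : F.Monic) (A B : D[X]) (hdvd : F.map (algebraMap K D) ∣ A * B)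
    (hFA : ∀ f : K[X], f.Monic → f ∣ F → f.map (algebraMap K D) ∣ A → f = 1)
    (hFB : ∀ f : K[X], f.Monic → f ∣ F → f.map (algebraMap K D) ∣ B → f = 1) :
    ∃ R A₁ B₁ : D[X], R.Monic ∧ A = A₁ * R ∧ B = cstar R * B₁ ∧
      F.map (algebraMap K D) = R * cstar R := by
  obtain ⟨S, U, V, hS, hSB, hSF, hSUV⟩ := exists_monic_gcd_left (hF.map (algebraMap K D)).ne_zero B
  have hAS : F.map (algebraMap K D) ∣ A * S := by
    rw [hSUV, mul_add, ← mul_assoc]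
    exact dvd_add (hdvd.mul_right U) (map_algebraMap_dvd_mul_left (dvd_mul_right _ V) A)
  have hFS : F.map (algebraMap K D) = cstar S * S :=
    (map_eq_mul_cstar_of_dvd hfix hF hS hFA hFB hSB hSF hAS).trans (commute_cstar hfix S).eq
  obtain ⟨W, hW⟩ := hAS
  obtain ⟨B₁, hB₁⟩ := hSB
  refine ⟨cstar S, W, B₁, monic_cstar hS, mul_right_cancel₀ hS.ne_zero ?_, ?_, ?_⟩
  · rw [hW, (commute_map_algebraMap F W).eq, hFS, mul_assoc]
  · rw [cstar_cstar, hB₁]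
  · rw [cstar_cstar, hFS]

/-- AB-Lemma. -/
theorem ab_lemma (F : ℝ[X]) (hF : F.Monic) (A B : Hq[X]) (hA : A ≠ 0) (hB : B ≠ 0)
    (hdvd : RDvdQ F (A * B))
    (hFA : ∀ f : ℝ[X], f.Monic → f ∣ F → RDvdQ f A → f = 1)
    (hFB : ∀ f : ℝ[X], f.Monic → f ∣ F → RDvdQ f B → f = 1) :
    ∃ R A₁ B₁ : Hq[X], R.Monic ∧ A = A₁ * R ∧ B = cstar R * B₁ ∧
      qPoly F = R * cstar R :=
  ab_lemma_general (K := ℝ) (D := Hq)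
    (fun _ => Quaternion.star_eq_self.trans Quaternion.eq_re_iff_mem_range_coe)
    F hF A B hdvd hFA hFB
end

section
/- Let M ∈ 𝔻ℍ[t] be a bounded monic reduced motion polynomial. Then there exist r ≥ 0, monic motion polynomials M₁, …, M_r ∈ 𝔻ℍ[t], pairwise coprime monic irreducible quadratic real polynomials N₁, …, N_r ∈ ℝ[t], and positive integers n₁, …, n_r such that M = M₁·M₂⋯M_r and ν(Mᵢ) = Nᵢ^{nᵢ} for i = 1, …, r. -/
open Polynomial DualNumber TrivSqZeroExt

/-! Since `M` is bounded, its norm polynomial `ν(M)` has no real root, so it is a product of powers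
`Nᵢ ^ nᵢ` of pairwise coprime irreducible quadratics, and it suffices to split `M = P + ε D`
along a factorization `ν(M) = F G` into coprime real factors. The monic generator `P₁` of the
right ideal `P ℍ[t] + F ℍ[t]` has norm `F`, which gives `P = P₁ P₂` with `P₂` of norm `G`. A Bezout
identity for `F = P₁ P₁*` and `G = P₂* P₂`, followed by division with remainder, gives
`D = P₁ D₂ + D₁ P₂` with `deg D₁ < deg P₁` and `deg D₂ < deg P₂`. The dual parts `e₁`, `e₂` of the
norms of `P₁ + ε D₁` and `P₂ + ε D₂` are real and satisfy `F e₂ + e₁ G = 0`. Hence `F` divides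
`e₁`, whose degree is smaller than that of `F`, and both `e₁` and `e₂` vanish. -/

section StarPolynomial

variable {R : Type*} [Semiring R]

theorem coeff_cstar [StarAddMonoid R] (A : R[X]) (n : ℕ) :
    (cstar A).coeff n = star (A.coeff n) := by
  rw [cstar, sum_def, finsetSum_coeff]
  simp only [coeff_C_mul, coeff_X_pow, mul_ite, mul_one, mul_zero, Finset.sum_ite_eq]
  split_ifs with h
  · rfl
  · rw [notMem_support_iff.1 h, star_zero]

variable [StarRing R]

/-- Coefficientwise conjugation `cstar` makes the polynomials over a star ring a star ring whose
indeterminate is self-adjoint. -/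
noncomputable instance polynomialStarRing : StarRing R[X] where
  star := cstar
  star_involutive A := by ext n; simp only [coeff_cstar, star_star]
  star_mul A B := by
    ext n
    simp only [coeff_cstar, coeff_mul, star_sum, star_mul]
    exact (Finset.Nat.sum_antidiagonal_swap
      (f := fun p : ℕ × ℕ => star (B.coeff p.1) * star (A.coeff p.2)))
  star_add A B := by ext n; simp only [coeff_cstar, coeff_add, star_add]

theorem coeff_star (A : R[X]) (n : ℕ) : (star A).coeff n = star (A.coeff n) :=
  coeff_cstar A n

theorem star_C (a : R) : star (C a : R[X]) = C (star a) := by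
  ext n
  rw [coeff_star, coeff_C, coeff_C, apply_ite star, star_zero]

theorem degree_star (A : R[X]) : (star A).degree = A.degree := by
  have hsupport : (star A).support = A.support := by
    ext n
    rw [mem_support_iff, mem_support_iff, coeff_star, star_ne_zero]
  rw [degree, degree, hsupport]

theorem natDegree_star (A : R[X]) : (star A).natDegree = A.natDegree :=
  natDegree_eq_of_degree_eq (degree_star A)

theorem monic_star {A : R[X]} (hA : A.Monic) : (star A).Monic := by
  rw [Monic, leadingCoeff, natDegree_star, coeff_star, hA.coeff_natDegree, star_one]

theorem eq_one_of_mul_star_eq_one {A : R[X]} (hA : A.Monic) (h : A * star A = 1) : A = 1 := by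
  have hdeg := hA.natDegree_mul (monic_star hA)
  rw [h, natDegree_one, natDegree_star] at hdeg
  exact eq_one_of_monic_natDegree_zero hA (by lia)

end StarPolynomial

section NoncommutativeDivision

theorem exists_monic_generator {K : Type*} [DivisionRing K] (I : Submodule K[X]ᵐᵒᵖ K[X])
    (hI : I ≠ ⊥) : ∃ D ∈ I, D.Monic ∧ ∀ A ∈ I, D ∣ A := by
  have mem_mul {A : K[X]} (hA : A ∈ I) (B : K[X]) : A * B ∈ I := I.smul_mem (.op B) hA
  have normalized {A : K[X]} (hA : A ∈ I) (hA0 : A ≠ 0) :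
      A * C A.leadingCoeff⁻¹ ∈ I ∧ (A * C A.leadingCoeff⁻¹).Monic :=
    ⟨mem_mul hA _, monic_mul_leadingCoeff_inv hA0⟩
  obtain ⟨A₀, hA₀, hA₀0⟩ := I.ne_bot_iff.1 hI
  obtain ⟨D, ⟨hDI, hD⟩, hmin⟩ := exists_minimalFor_of_wellFoundedLT
    (fun D : K[X] => D ∈ I ∧ D.Monic) degree ⟨_, normalized hA₀ hA₀0⟩
  refine ⟨D, hDI, hD, fun A hA => (modByMonic_eq_zero_iff_dvd hD).1 ?_⟩
  by_contra hR
  have hRI : A %ₘ D ∈ I := by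
    rw [modByMonic_eq_sub_mul_div]
    exact I.sub_mem hA (mem_mul hDI _)
  have hlt : (A %ₘ D * C (A %ₘ D).leadingCoeff⁻¹).degree < D.degree := by
    rw [degree_mul_leadingCoeff_inv _ hR]
    exact degree_modByMonic_lt A hD
  exact hlt.not_ge (hmin (normalized hRI hR) hlt.le)

theorem exists_degree_lt_of_mul_add_mul {R : Type*} [Ring R] [Nontrivial R] {P₁ P₂ : R[X]}
    (hP₁ : P₁.Monic) (hP₂ : P₂.Monic) {U V : R[X]}
    (hdeg : (P₁ * U + V * P₂).degree < (P₁ * P₂).degree) :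
    ∃ D₁ D₂ : R[X], D₁.degree < P₁.degree ∧ D₂.degree < P₂.degree ∧
      P₁ * D₂ + D₁ * P₂ = P₁ * U + V * P₂ := by
  set D₁ := V %ₘ P₁ with hD₁
  set D₂ := U + V /ₘ P₁ * P₂ with hD₂
  have hsum : P₁ * D₂ + D₁ * P₂ = P₁ * U + V * P₂ := by
    conv_rhs => rw [← modByMonic_add_div V P₁]
    rw [hD₁, hD₂]
    noncomm_ring
  have hD₁lt : D₁.degree < P₁.degree := degree_modByMonic_lt V hP₁
  refine ⟨D₁, D₂, hD₁lt, ?_, hsum⟩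
  have hlt : (P₁ * D₂).degree < (P₁ * P₂).degree := by
    rw [eq_sub_of_add_eq hsum]
    refine (degree_sub_le _ _).trans_lt (max_lt hdeg ?_)
    rw [hP₂.degree_mul, hP₂.degree_mul]
    exact WithBot.add_lt_add_right (degree_ne_bot.2 hP₂.ne_zero) hD₁lt
  rw [hP₂.degree_mul, hP₁.degree_mul_comm, hP₁.degree_mul, add_comm] at hlt
  exact lt_of_add_lt_add_left hlt

end NoncommutativeDivision

section NormPolynomial

theorem qPoly_injective : Function.Injective qPoly :=
  map_injective _ (algebraMap ℝ Hq).injective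

theorem qPoly_zero : qPoly 0 = 0 := Polynomial.map_zero _

theorem qPoly_one : qPoly 1 = 1 := Polynomial.map_one _

theorem qPoly_add (f g : ℝ[X]) : qPoly (f + g) = qPoly f + qPoly g := Polynomial.map_add _

theorem qPoly_mul (f g : ℝ[X]) : qPoly (f * g) = qPoly f * qPoly g := Polynomial.map_mul _

theorem monic_qPoly_iff {f : ℝ[X]} : (qPoly f).Monic ↔ f.Monic := monic_map_iff

theorem degree_qPoly (f : ℝ[X]) : (qPoly f).degree = f.degree := degree_map _ _

theorem qPoly_dvd_qPoly_iff {F g : ℝ[X]} (hF : F.Monic) : qPoly F ∣ qPoly g ↔ F ∣ g :=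
  map_dvd_map _ (algebraMap ℝ Hq).injective hF

theorem commute_qPoly (f : ℝ[X]) (A : Hq[X]) : Commute (qPoly f) A :=
  letI := Polynomial.algebra ℝ Hq
  Algebra.commutes f A

theorem isSelfAdjoint_qPoly (f : ℝ[X]) : IsSelfAdjoint (qPoly f) := by
  ext1 n
  rw [coeff_star, qPoly, coeff_map, Quaternion.algebraMap_def, Quaternion.star_coe]

theorem exists_qPoly_eq_of_isSelfAdjoint {A : Hq[X]} (hA : IsSelfAdjoint A) :
    ∃ f : ℝ[X], qPoly f = A := by
  refine (mem_lifts A).1 ((lifts_iff_coeff_lifts A).2 fun n => ⟨(A.coeff n).re, ?_⟩)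
  have hcoeff : star (A.coeff n) = A.coeff n := by rw [← coeff_star, hA.star_eq]
  exact (Quaternion.star_eq_self.1 hcoeff).symm

/-- The norm polynomial of a quaternion polynomial, as a real polynomial: the preimage of `P * P*`
under `qPoly`. -/
noncomputable def normPoly (P : Hq[X]) : ℝ[X] :=
  (exists_qPoly_eq_of_isSelfAdjoint (IsSelfAdjoint.mul_star_self P)).choose

theorem qPoly_normPoly (P : Hq[X]) : qPoly (normPoly P) = P * star P :=
  (exists_qPoly_eq_of_isSelfAdjoint (IsSelfAdjoint.mul_star_self P)).choose_spec

theorem star_mul_self_eq_qPoly_normPoly (P : Hq[X]) : star P * P = qPoly (normPoly P) := by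
  rcases eq_or_ne P 0 with rfl | hP
  · rw [qPoly_normPoly, star_zero]
  · apply mul_left_cancel₀ hP
    rw [← mul_assoc, ← qPoly_normPoly, commute_qPoly]

theorem normPoly_mul (P Q : Hq[X]) : normPoly (P * Q) = normPoly P * normPoly Q := by
  apply qPoly_injective
  rw [qPoly_normPoly, star_mul, mul_assoc, ← mul_assoc Q, ← qPoly_normPoly, commute_qPoly,
    ← mul_assoc, ← qPoly_normPoly, qPoly_mul]

theorem normPoly_qPoly (f : ℝ[X]) : normPoly (qPoly f) = f * f := by
  apply qPoly_injective
  rw [qPoly_normPoly, (isSelfAdjoint_qPoly f).star_eq, qPoly_mul]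

theorem normPoly_C (a : Hq) : normPoly (C a) = C (Quaternion.normSq a) := by
  apply qPoly_injective
  rw [qPoly_normPoly, star_C, ← C_mul, Quaternion.self_mul_star, qPoly, map_C,
    Quaternion.algebraMap_def]

theorem monic_normPoly {P : Hq[X]} (hP : P.Monic) : (normPoly P).Monic := by
  rw [← monic_qPoly_iff, qPoly_normPoly]
  exact hP.mul (monic_star hP)

theorem degree_normPoly (P : Hq[X]) : (normPoly P).degree = P.degree + P.degree := by
  rw [← degree_qPoly, qPoly_normPoly, degree_mul, degree_star]

theorem dvd_normPoly_add_qPoly_mul {F : ℝ[X]} (hF : F.Monic) {A : Hq[X]} (h : F ∣ normPoly A)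
    (B : Hq[X]) : F ∣ normPoly (A + qPoly F * B) := by
  rw [← qPoly_dvd_qPoly_iff hF, qPoly_normPoly] at h ⊢
  have hstar : star (qPoly F * B) = qPoly F * star B := by
    rw [star_mul, (isSelfAdjoint_qPoly F).star_eq, commute_qPoly]
  rw [star_add, add_mul, mul_add, hstar, mul_assoc (qPoly F), ← mul_assoc A,
    ← (commute_qPoly F A).eq, mul_assoc (qPoly F)]
  exact (h.add (Dvd.intro _ rfl)).add (Dvd.intro _ rfl)

theorem X_sub_C_dvd_of_isRoot_normPoly {P : Hq[X]} {a : ℝ} (h : (normPoly P).IsRoot a) :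
    RDvdQ (X - C a) P := by
  have hlin : (X - C a).Monic := monic_X_sub_C a
  have hdiv := modByMonic_add_div P (qPoly (X - C a))
  obtain ⟨c, hc⟩ : ∃ c, P %ₘ qPoly (X - C a) = C c := by
    have hdeg := degree_modByMonic_lt P (monic_qPoly_iff.2 hlin)
    rw [degree_qPoly, degree_X_sub_C] at hdeg
    exact ⟨_, eq_C_of_degree_le_zero (Nat.WithBot.lt_one_iff_le_zero.1 hdeg)⟩
  have hdvd : X - C a ∣ normPoly (C c) := by
    have hadd := dvd_normPoly_add_qPoly_mul hlin (dvd_iff_isRoot.2 h) (-(P /ₘ qPoly (X - C a)))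
    rwa [mul_neg, ← sub_eq_add_neg, ← eq_sub_of_add_eq hdiv, hc] at hadd
  have hc0 : c = 0 := by
    rwa [normPoly_C, dvd_iff_isRoot, IsRoot, eval_C, Quaternion.normSq_eq_zero] at hdvd
  exact (modByMonic_eq_zero_iff_dvd (monic_qPoly_iff.2 hlin)).1 (by rw [hc, hc0, C_0])

theorem exists_normPoly_factorization {F G : ℝ[X]} (hF : F.Monic) (hFG : IsCoprime F G)
    {P : Hq[X]} (hP : P.Monic) (h : normPoly P = F * G) :
    ∃ P₁ P₂ : Hq[X], P₁.Monic ∧ P₂.Monic ∧ P = P₁ * P₂ ∧ normPoly P₁ = F ∧ normPoly P₂ = G := by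
  set I := Submodule.span Hq[X]ᵐᵒᵖ {P, qPoly F}
  have hPI : P ∈ I := Submodule.subset_span (by simp)
  have hFI : qPoly F ∈ I := Submodule.subset_span (by simp)
  obtain ⟨P₁, hP₁I, hP₁, hdvd⟩ := exists_monic_generator I (I.ne_bot_iff.2 ⟨P, hPI, hP.ne_zero⟩)
  obtain ⟨P₂, hP₂⟩ := hdvd P hPI
  obtain ⟨Q, hQ⟩ := hdvd (qPoly F) hFI
  obtain ⟨U, V, hUV⟩ := Submodule.mem_span_pair.1 hP₁I
  have hnorm : normPoly P₁ * normPoly P₂ = F * G := by rw [← normPoly_mul, ← hP₂, h]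
  have hF_dvd : F ∣ normPoly P₁ := by
    rw [← hUV, MulOpposite.smul_eq_mul_unop, MulOpposite.smul_eq_mul_unop]
    refine dvd_normPoly_add_qPoly_mul hF ?_ _
    rw [normPoly_mul, h, mul_assoc]
    exact dvd_mul_right F _
  have hdvd_F : normPoly P₁ ∣ F := by
    have hFF : normPoly P₁ ∣ F * F := by
      rw [← normPoly_qPoly, hQ, normPoly_mul]
      exact dvd_mul_right _ _
    obtain ⟨a, b, hab⟩ := hFG
    have hbezout : F = a * (F * F) + b * (F * G) := by linear_combination -F * hab
    rw [hbezout]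
    exact (hFF.mul_left a).add ((Dvd.intro _ hnorm).mul_left b)
  have hP₁F : normPoly P₁ = F :=
    eq_of_monic_of_associated (monic_normPoly hP₁) hF (associated_of_dvd_dvd hdvd_F hF_dvd)
  exact ⟨P₁, P₂, hP₁, hP₁.of_mul_monic_left (hP₂ ▸ hP), hP₂, hP₁F,
    mul_left_cancel₀ hF.ne_zero (hP₁F ▸ hnorm)⟩

theorem isSelfAdjoint_mul_star_add (P D : Hq[X]) : IsSelfAdjoint (P * star D + D * star P) := by
  rw [IsSelfAdjoint, star_add, star_mul, star_mul, star_star, star_star, add_comm]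

/-- The dual part `P D* + D P*` of the norm polynomial of `P + ε D`, as a real polynomial. -/
noncomputable def dualNormPoly (P D : Hq[X]) : ℝ[X] :=
  (exists_qPoly_eq_of_isSelfAdjoint (isSelfAdjoint_mul_star_add P D)).choose

theorem qPoly_dualNormPoly (P D : Hq[X]) :
    qPoly (dualNormPoly P D) = P * star D + D * star P :=
  (exists_qPoly_eq_of_isSelfAdjoint (isSelfAdjoint_mul_star_add P D)).choose_spec

theorem dualNormPoly_mul (P₁ D₁ P₂ D₂ : Hq[X]) :
    dualNormPoly (P₁ * P₂) (P₁ * D₂ + D₁ * P₂) =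
      normPoly P₁ * dualNormPoly P₂ D₂ + dualNormPoly P₁ D₁ * normPoly P₂ := by
  apply qPoly_injective
  calc
    qPoly (dualNormPoly (P₁ * P₂) (P₁ * D₂ + D₁ * P₂)) =
        P₁ * (P₂ * star D₂ + D₂ * star P₂) * star P₁ +
          (P₁ * (P₂ * star P₂) * star D₁ + D₁ * (P₂ * star P₂) * star P₁) := by
      rw [qPoly_dualNormPoly]
      simp only [star_add, star_mul]
      noncomm_ring
    _ = qPoly (dualNormPoly P₂ D₂) * (P₁ * star P₁) +
          qPoly (normPoly P₂) * (P₁ * star D₁ + D₁ * star P₁) := by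
      rw [← qPoly_dualNormPoly P₂, ← qPoly_normPoly P₂, ← (commute_qPoly _ P₁).eq,
        ← (commute_qPoly _ P₁).eq, ← (commute_qPoly _ D₁).eq]
      simp only [mul_add, mul_assoc]
    _ = qPoly (normPoly P₁ * dualNormPoly P₂ D₂ + dualNormPoly P₁ D₁ * normPoly P₂) := by
      rw [← qPoly_normPoly P₁, ← qPoly_dualNormPoly P₁, ← qPoly_mul, ← qPoly_mul, ← qPoly_add,
        mul_comm, mul_comm (normPoly P₂)]

theorem degree_dualNormPoly_lt {P D : Hq[X]} (h : D.degree < P.degree) :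
    (dualNormPoly P D).degree < (normPoly P).degree := by
  have hP : P.degree ≠ ⊥ := h.ne_bot
  rw [← degree_qPoly, qPoly_dualNormPoly, degree_normPoly]
  refine (degree_add_le _ _).trans_lt (max_lt ?_ ?_)
  · rw [degree_mul, degree_star]
    exact WithBot.add_lt_add_left hP h
  · rw [degree_mul, degree_star]
    exact WithBot.add_lt_add_right hP h

theorem dualNormPoly_eq_zero_of_mul {P₁ D₁ P₂ D₂ : Hq[X]}
    (hcoprime : IsCoprime (normPoly P₁) (normPoly P₂)) (hD₁ : D₁.degree < P₁.degree)
    (h : dualNormPoly (P₁ * P₂) (P₁ * D₂ + D₁ * P₂) = 0) :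
    dualNormPoly P₁ D₁ = 0 ∧ dualNormPoly P₂ D₂ = 0 := by
  rw [dualNormPoly_mul] at h
  have hP₁ : normPoly P₁ ≠ 0 := ne_zero_of_degree_gt (degree_dualNormPoly_lt hD₁)
  have hdvd : normPoly P₁ ∣ dualNormPoly P₁ D₁ :=
    hcoprime.dvd_of_dvd_mul_right ⟨-dualNormPoly P₂ D₂, by linear_combination h⟩
  have hzero := eq_zero_of_dvd_of_degree_lt hdvd (degree_dualNormPoly_lt hD₁)
  rw [hzero, zero_mul, add_zero] at h
  exact ⟨hzero, (mul_eq_zero.1 h).resolve_left hP₁⟩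

end NormPolynomial

section DualQuaternionPolynomial

theorem fst_star (x : DHq) : (star x).fst = star x.fst := by
  change fst (inl (star x.fst) + inr (star x.snd)) = _
  rw [fst_add, fst_inl, fst_inr, add_zero]

theorem snd_star (x : DHq) : (star x).snd = star x.snd := by
  change snd (inl (star x.fst) + inr (star x.snd)) = _
  rw [snd_add, snd_inl, snd_inr, zero_add]

/-- Dual quaternion conjugation fixes `ε`; it reverses products because `ε` is central. -/
noncomputable instance dualQuaternionStarRing : StarRing DHq where
  star_involutive x := by apply TrivSqZeroExt.ext <;> simp only [fst_star, snd_star, star_star]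
  star_mul x y := by
    apply TrivSqZeroExt.ext
    · simp only [fst_star, fst_mul, star_mul]
    · simp only [fst_star, snd_star, DualNumber.snd_mul, star_add, star_mul, add_comm]
  star_add x y := by
    apply TrivSqZeroExt.ext <;> simp only [fst_star, snd_star, fst_add, snd_add, star_add]

theorem coeff_mp (P D : Hq[X]) (n : ℕ) :
    (mp P D).coeff n = inl (P.coeff n) + inr (D.coeff n) := by
  rw [mp, dhQ, dhQ, coeff_add, coeff_C_mul, coeff_map, coeff_map]
  apply TrivSqZeroExt.ext <;> simp

theorem mp_injective2 : Function.Injective2 mp := by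
  intro P P' D D' h
  have hcoeff (n : ℕ) := congrArg (fun A => A.coeff n) h
  simp only [coeff_mp] at hcoeff
  constructor
  · ext1 n
    simpa using congrArg fst (hcoeff n)
  · ext1 n
    simpa using congrArg snd (hcoeff n)

theorem exists_eq_mp (M : DHq[X]) : ∃ P D : Hq[X], M = mp P D := by
  induction M using Polynomial.induction_on' with
  | add A B hA hB =>
    obtain ⟨P, D, rfl⟩ := hA
    obtain ⟨P', D', rfl⟩ := hB
    refine ⟨P + P', D + D', ?_⟩
    ext1 n
    simp only [coeff_add, coeff_mp, inl_add, inr_add]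
    abel
  | monomial n a =>
    refine ⟨monomial n a.fst, monomial n a.snd, ?_⟩
    ext1 m
    rw [coeff_mp, coeff_monomial, coeff_monomial, coeff_monomial]
    split_ifs
    · rw [inl_fst_add_inr_snd_eq]
    · rw [inl_zero, inr_zero, add_zero]

theorem mp_mul_mp (P D P' D' : Hq[X]) :
    mp P D * mp P' D' = mp (P * P') (P * D' + D * P') := by
  ext1 n
  simp only [coeff_mp, coeff_mul, coeff_add]
  apply TrivSqZeroExt.ext
  · simp [fst_sum]
  · simp [snd_sum, Finset.sum_add_distrib]

theorem star_mp (P D : Hq[X]) : star (mp P D) = mp (star P) (star D) := by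
  ext1 n
  rw [coeff_star, coeff_mp, coeff_mp, coeff_star, coeff_star]
  apply TrivSqZeroExt.ext <;> simp [fst_star, snd_star]

theorem dPoly_eq_mp (f : ℝ[X]) : dPoly f = mp (qPoly f) 0 := by
  rw [dPoly, mp, dhQ, dhQ, Polynomial.map_zero, mul_zero, add_zero]

theorem dPoly_one : dPoly 1 = 1 := by
  rw [dPoly, dhQ, qPoly_one, Polynomial.map_one]

theorem mp_mul_star_eq_dPoly_iff {P D : Hq[X]} {f : ℝ[X]} :
    mp P D * star (mp P D) = dPoly f ↔ normPoly P = f ∧ dualNormPoly P D = 0 := by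
  rw [star_mp, mp_mul_mp, dPoly_eq_mp, mp_injective2.eq_iff, ← qPoly_normPoly,
    ← qPoly_dualNormPoly, qPoly_injective.eq_iff, ← qPoly_zero, qPoly_injective.eq_iff]

theorem monic_mp_iff {P D : Hq[X]} : (mp P D).Monic ↔ P.Monic ∧ D.degree < P.degree := by
  constructor
  · intro h
    have hprimal : P = primal (mp P D) := (primal_mp P D).symm
    have hP : P.Monic := by
      rw [hprimal]
      exact h.map _
    have hdeg : P.natDegree = (mp P D).natDegree := by
      conv_lhs => rw [hprimal]
      exact h.natDegree_map _
    refine ⟨hP, ?_⟩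
    rw [degree_eq_natDegree hP.ne_zero, hdeg, degree_lt_iff_coeff_zero]
    intro m hm
    have hsnd : snd ((mp P D).coeff m) = D.coeff m := by
      rw [coeff_mp, snd_add, snd_inl, snd_inr, zero_add]
    rw [← hsnd]
    rcases hm.eq_or_lt with rfl | hlt
    · rw [h.coeff_natDegree, snd_one]
    · rw [coeff_eq_zero_of_natDegree_lt hlt, snd_zero]
  · rintro ⟨hP, hD⟩
    refine (hP.map _).add_of_left ?_
    rw [dhQ, hP.degree_map]
    refine (degree_mul_le _ _).trans_lt ?_
    exact (add_le_of_nonpos_left degree_C_le).trans_lt (degree_map_le.trans_lt hD)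

theorem monic_of_mul_star_eq_dPoly {M : DHq[X]} {f : ℝ[X]} (hM : M.Monic)
    (h : M * star M = dPoly f) : f.Monic := by
  obtain ⟨P, D, rfl⟩ := exists_eq_mp M
  rw [← (mp_mul_star_eq_dPoly_iff.1 h).1]
  exact monic_normPoly (monic_mp_iff.1 hM).1

theorem not_isRoot_of_boundedD {M : DHq[X]} {f : ℝ[X]} (hM : BoundedD M)
    (h : M * star M = dPoly f) (a : ℝ) : ¬ f.IsRoot a := by
  obtain ⟨P, D, rfl⟩ := exists_eq_mp M
  rw [← (mp_mul_star_eq_dPoly_iff.1 h).1]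
  exact fun ha => hM a ((primal_mp P D).symm ▸ X_sub_C_dvd_of_isRoot_normPoly ha)

theorem exists_motion_factorization {F G : ℝ[X]} (hF : F.Monic) (hFG : IsCoprime F G)
    {M : DHq[X]} (hM : M.Monic) (h : M * star M = dPoly (F * G)) :
    ∃ M₁ M₂ : DHq[X], M₁.Monic ∧ M₂.Monic ∧ M = M₁ * M₂ ∧
      M₁ * star M₁ = dPoly F ∧ M₂ * star M₂ = dPoly G := by
  obtain ⟨P, D, rfl⟩ := exists_eq_mp M
  obtain ⟨hP, hD⟩ := monic_mp_iff.1 hM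
  obtain ⟨hnorm, hdual⟩ := mp_mul_star_eq_dPoly_iff.1 h
  obtain ⟨P₁, P₂, hP₁, hP₂, rfl, rfl, rfl⟩ := exists_normPoly_factorization hF hFG hP hnorm
  have ⟨a, b, hab⟩ := hFG
  have hbezout : P₁ * (qPoly a * star P₁ * D) + (qPoly b * D * star P₂) * P₂ = D := by
    calc
      _ = P₁ * qPoly a * star P₁ * D + qPoly b * D * (star P₂ * P₂) := by noncomm_ring
      _ = qPoly (a * normPoly P₁ + b * normPoly P₂) * D := by
        rw [← (commute_qPoly a P₁).eq, star_mul_self_eq_qPoly_normPoly, mul_assoc (qPoly a),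
          ← qPoly_normPoly, mul_assoc (qPoly b), ← (commute_qPoly _ D).eq, ← mul_assoc (qPoly b),
          ← add_mul, ← qPoly_mul, ← qPoly_mul, ← qPoly_add]
      _ = D := by rw [hab, qPoly_one, one_mul]
  obtain ⟨D₁, D₂, hD₁, hD₂, hsum⟩ :=
    exists_degree_lt_of_mul_add_mul hP₁ hP₂ (hbezout.symm ▸ hD)
  rw [hbezout] at hsum
  subst hsum
  obtain ⟨hdual₁, hdual₂⟩ := dualNormPoly_eq_zero_of_mul hFG hD₁ hdual
  exact ⟨mp P₁ D₁, mp P₂ D₂, monic_mp_iff.2 ⟨hP₁, hD₁⟩, monic_mp_iff.2 ⟨hP₂, hD₂⟩,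
    (mp_mul_mp P₁ D₁ P₂ D₂).symm, mp_mul_star_eq_dPoly_iff.2 ⟨rfl, hdual₁⟩,
    mp_mul_star_eq_dPoly_iff.2 ⟨rfl, hdual₂⟩⟩

theorem exists_motion_factorization_prod {r : ℕ} {F : Fin r → ℝ[X]} (hF : ∀ i, (F i).Monic)
    (hcoprime : ∀ i j, i ≠ j → IsCoprime (F i) (F j)) {M : DHq[X]} (hM : M.Monic)
    (h : M * star M = dPoly (∏ i, F i)) :
    ∃ Ms : Fin r → DHq[X], (∀ i, (Ms i).Monic) ∧ (∀ i, Ms i * star (Ms i) = dPoly (F i)) ∧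
      M = (List.ofFn Ms).prod := by
  induction r generalizing M with
  | zero =>
    rw [Fin.prod_univ_zero, dPoly_one] at h
    exact ⟨Fin.elim0, fun i => i.elim0, fun i => i.elim0, by
      rw [List.ofFn_zero, List.prod_nil, eq_one_of_mul_star_eq_one hM h]⟩
  | succ r ih =>
    have hhead : IsCoprime (F 0) (∏ i : Fin r, F i.succ) :=
      IsCoprime.prod_right fun i _ => hcoprime 0 i.succ (Fin.succ_ne_zero i).symm
    rw [Fin.prod_univ_succ] at h
    obtain ⟨M₁, M₂, hM₁, hM₂, rfl, h₁, h₂⟩ := exists_motion_factorization (hF 0) hhead hM h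
    obtain ⟨Ms, hMs, hnorm, rfl⟩ := ih (fun i => hF i.succ)
      (fun i j hij => hcoprime i.succ j.succ (Fin.succ_injective r |>.ne hij)) hM₂ h₂
    refine ⟨Fin.cons M₁ Ms, Fin.cases hM₁ hMs, Fin.cases h₁ hnorm, ?_⟩
    rw [List.ofFn_cons, List.prod_cons]

end DualQuaternionPolynomial

section PrimaryDecomposition

theorem exists_prod_pow_irreducible {K : Type*} [Field K] {f : K[X]} (hf : f.Monic) :
    ∃ (r : ℕ) (N : Fin r → K[X]) (n : Fin r → ℕ),
      (∀ i, (N i).Monic ∧ Irreducible (N i)) ∧ (∀ i j, i ≠ j → IsCoprime (N i) (N j)) ∧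
      (∀ i, 0 < n i) ∧ f = ∏ i, N i ^ n i := by
  classical
  set factors := UniqueFactorizationMonoid.normalizedFactors f
  set e := factors.toFinset.equivFin.symm
  have hmem (i) : (e i : K[X]) ∈ factors := Multiset.mem_toFinset.1 (e i).2
  have hirr (i) : Irreducible (e i : K[X]) :=
    UniqueFactorizationMonoid.irreducible_of_normalized_factor _ (hmem i)
  have hmonic (i) : (e i : K[X]).Monic := by
    rw [← UniqueFactorizationMonoid.normalize_normalized_factor _ (hmem i)]
    exact monic_normalize (hirr i).ne_zero
  refine ⟨_, fun i => e i, fun i => factors.count (e i : K[X]), fun i => ⟨hmonic i, hirr i⟩,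
    fun i j hij => ?_, fun i => Multiset.count_pos.2 (hmem i), ?_⟩
  · refine (hirr i).coprime_iff_not_dvd.2 fun hdvd => hij (e.injective (Subtype.ext ?_))
    exact eq_of_monic_of_associated (hmonic i) (hmonic j)
      ((hirr i).associated_of_dvd (hirr j) hdvd)
  · calc
      f = factors.prod := by
        rw [UniqueFactorizationMonoid.prod_normalizedFactors_eq hf.ne_zero, hf.normalize_eq_self]
      _ = ∏ p : factors.toFinset, (p : K[X]) ^ factors.count (p : K[X]) := by
        rw [Finset.prod_multiset_count, ← Finset.prod_coe_sort]
      _ = ∏ i, (e i : K[X]) ^ factors.count (e i : K[X]) := (e.prod_comp _).symm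

theorem natDegree_eq_two_of_irreducible_of_not_isRoot {N : ℝ[X]} (hN : Irreducible N)
    (hroot : ∀ a, ¬ N.IsRoot a) : N.natDegree = 2 := by
  have hne_one : N.natDegree ≠ 1 := fun h => by
    obtain ⟨a, ha⟩ := exists_root_of_degree_eq_one ((degree_eq_iff_natDegree_eq_of_pos one_pos).2 h)
    exact hroot a ha
  have hpos := hN.natDegree_pos
  have hle := hN.natDegree_le_two
  lia

theorem primary_norm_decomposition_general
    (M : DHq[X]) (hmonic : M.Monic) (hmotion : IsMotion M) (hbdd : BoundedD M) :
    ∃ (r : ℕ) (Ms : Fin r → DHq[X]) (Ns : Fin r → ℝ[X]) (ns : Fin r → ℕ),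
      (∀ i, (Ms i).Monic ∧ IsMotion (Ms i)) ∧
      (∀ i, (Ns i).Monic ∧ Irreducible (Ns i) ∧ (Ns i).natDegree = 2) ∧
      (∀ i j, i ≠ j → IsCoprime (Ns i) (Ns j)) ∧
      (∀ i, 0 < ns i) ∧
      (∀ i, Ms i * cstar (Ms i) = dPoly (Ns i ^ ns i)) ∧
      M = (List.ofFn Ms).prod := by
  obtain ⟨f, -, hf⟩ := hmotion
  obtain ⟨r, Ns, ns, hNs, hcoprime, hns, rfl⟩ :=
    exists_prod_pow_irreducible (monic_of_mul_star_eq_dPoly hmonic hf)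
  have hdvd (i) : Ns i ∣ ∏ j, Ns j ^ ns j :=
    (dvd_pow_self _ (hns i).ne').trans (Finset.dvd_prod_of_mem _ (Finset.mem_univ i))
  have hroot (i a) : ¬ (Ns i).IsRoot a := fun h =>
    not_isRoot_of_boundedD hbdd hf a (h.dvd (hdvd i))
  obtain ⟨Ms, hMs, hnorm, hprod⟩ := exists_motion_factorization_prod
    (fun i => (hNs i).1.pow (ns i)) (fun i j hij => (hcoprime i j hij).pow) hmonic hf
  exact ⟨r, Ms, Ns, ns,
    fun i => ⟨hMs i, Ns i ^ ns i, ((hNs i).1.pow (ns i)).ne_zero, hnorm i⟩,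
    fun i => ⟨(hNs i).1, (hNs i).2,
      natDegree_eq_two_of_irreducible_of_not_isRoot (hNs i).2 (hroot i)⟩,
    hcoprime, hns, hnorm, hprod⟩

end PrimaryDecomposition

/-- Every bounded monic reduced motion polynomial decomposes into monic motion
polynomial factors of primary norm. -/
theorem primary_norm_decomposition
    (M : DHq[X]) (hmonic : M.Monic) (hmotion : IsMotion M)
    (hred : ReducedD M) (hbdd : BoundedD M) :
    ∃ (r : ℕ) (Ms : Fin r → DHq[X]) (Ns : Fin r → ℝ[X]) (ns : Fin r → ℕ),
      (∀ i, (Ms i).Monic ∧ IsMotion (Ms i)) ∧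
      (∀ i, (Ns i).Monic ∧ Irreducible (Ns i) ∧ (Ns i).natDegree = 2) ∧
      (∀ i j, i ≠ j → IsCoprime (Ns i) (Ns j)) ∧
      (∀ i, 0 < ns i) ∧
      (∀ i, Ms i * cstar (Ms i) = dPoly (Ns i ^ ns i)) ∧
      M = (List.ofFn Ms).prod :=
  primary_norm_decomposition_general M hmonic hmotion hbdd
end
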